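/- arXiv:1803.02017 — 2 statements merged into one kernel-verified Lean document; each statement's English description precedes it below -/
import Mathlib

section
/- Let I ⊆ R be a squarefree monomial ideal and let f be a squarefree monomial of R. Then depth(R/(I : f)) ≥ depth(R/I). -/
/-!
Write `f = x^a`, choose `p` larger than all entries of `a`, and let `φ : x_i ↦ x_i ^ p`. The
additive map `ρ` sending `x^(p c + a)` to `x^c` and all other monomials to `0` satisfies
`ρ (φ g * h) = g * ρ h` and `ρ x^a = 1`. A squarefree monomial divides `x^(p c + a)` if and only if
it divides `x^(c + a)`. Hence `g ↦ φ g * x^a` and `ρ` induce maps between `R/(I : f)` and `R/I` that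
exhibit `R/(I : f)` as a direct summand of the restriction of scalars `φ_* (R/I)`.

It remains to see that `Ext^i(R/m, R/I) = 0` implies `Ext^i(R/m, φ_* (R/I)) = 0`. The ring `R` is
free over `φ(R)` on the monomials with all exponents less than `p`, so `φ` is flat and extension of
scalars along `φ` is exact. Dimension shifting then shows that `Ext^i(R ⊗_φ R/m, M)` maps onto
`Ext^i(R/m, φ_* M)` by restricting along `φ` and composing with the unit of the adjunction. Finally
`R ⊗_φ R/m` is finitely generated and killed by a power of `m`, so all factors of a prime filtration
of it are isomorphic to `R/m`, and its `Ext^i` into `R/I` vanishes along with that of `R/m`.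
-/

open MvPolynomial CategoryTheory Opposite

noncomputable section

/-- The polynomial ring `K[x_v : v ∈ σ]` over the field `K`. -/
abbrev MvPoly (K : Type) [Field K] (σ : Type) : Type := MvPolynomial σ K

variable (K : Type) [Field K] (σ : Type)

/-- The graded maximal ideal `m = (x_v : v ∈ σ)` generated by all the variables. -/
def maxIdeal : Ideal (MvPoly K σ) := Ideal.span (Set.range MvPolynomial.X)

/-- The depth of `R/I` with respect to the graded maximal ideal, defined as
`inf { i | Ext^i(R/m, R/I) ≠ 0 }` (with value `⊤` for the zero module). -/
def depthQ (I : Ideal (MvPoly K σ)) : ℕ∞ :=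
  sInf { d : ℕ∞ | ∃ i : ℕ, d = i ∧
    Nontrivial (((Ext (MvPoly K σ) (ModuleCat (MvPoly K σ)) i).obj
      (op (ModuleCat.of (MvPoly K σ) (MvPoly K σ ⧸ maxIdeal K σ)))).obj
      (ModuleCat.of (MvPoly K σ) (MvPoly K σ ⧸ I))) }

variable {n : ℕ}

/-- The monomial `x^a`. -/
def mono (K : Type) [Field K] {n : ℕ} (a : Fin n →₀ ℕ) : MvPoly K (Fin n) :=
  MvPolynomial.monomial a 1

/-- A monomial ideal: an ideal generated by monomials. -/
def IsMonomialIdeal (I : Ideal (MvPoly K (Fin n))) : Prop :=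
  ∃ S : Set (Fin n →₀ ℕ), I = Ideal.span (mono K '' S)

/-- A squarefree exponent vector. -/
def SqfreeExp (a : Fin n →₀ ℕ) : Prop := ∀ i, a i ≤ 1

/-- A squarefree monomial ideal: an ideal generated by squarefree monomials. -/
def IsSqfreeMonomialIdeal (I : Ideal (MvPoly K (Fin n))) : Prop :=
  ∃ S : Set (Fin n →₀ ℕ), (∀ a ∈ S, SqfreeExp a) ∧ I = Ideal.span (mono K '' S)

end

/-! ### Vanishing of Ext -/

section Ext
open Abelian Limits
universe w w' v v' u u'
variable {C : Type u} [Category.{v} C] [Abelian C]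

section HasExt
variable [HasExt.{w} C]

theorem subsingleton_ext_of_retract_left {X X' : C} (r : Retract X X') (Y : C) (n : ℕ)
    [Subsingleton (Abelian.Ext X' Y n)] : Subsingleton (Abelian.Ext X Y n) :=
  subsingleton_of_forall_eq 0 fun x => calc
    x = (Ext.mk₀ r.i).comp ((Ext.mk₀ r.r).comp x (zero_add n)) (zero_add n) := by
        rw [Ext.mk₀_comp_mk₀_assoc, r.retract, Ext.mk₀_id_comp]
    _ = 0 := by rw [Subsingleton.elim ((Ext.mk₀ r.r).comp x _) 0, Ext.comp_zero]

theorem subsingleton_ext_of_retract_right (X : C) {Y Y' : C} (r : Retract Y Y') (n : ℕ)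
    [Subsingleton (Abelian.Ext X Y' n)] : Subsingleton (Abelian.Ext X Y n) :=
  subsingleton_of_forall_eq 0 fun x => calc
    x = (x.comp (Ext.mk₀ r.i) (add_zero n)).comp (Ext.mk₀ r.r) (add_zero n) := by
        rw [Ext.comp_assoc_of_second_deg_zero, Ext.mk₀_comp_mk₀, r.retract, Ext.comp_mk₀_id]
    _ = 0 := by rw [Subsingleton.elim (x.comp (Ext.mk₀ r.i) _) 0, Ext.zero_comp]

theorem subsingleton_ext_of_shortExact {S : ShortComplex C} (hS : S.ShortExact) (Y : C) (n : ℕ)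
    [Subsingleton (Abelian.Ext S.X₁ Y n)] [Subsingleton (Abelian.Ext S.X₃ Y n)] :
    Subsingleton (Abelian.Ext S.X₂ Y n) := by
  refine subsingleton_of_forall_eq 0 fun x => ?_
  obtain ⟨y, rfl⟩ := Ext.contravariant_sequence_exact₂ hS Y x (Subsingleton.elim _ _)
  rw [Subsingleton.elim y 0, Ext.comp_zero]

end HasExt

section Adjunction
variable {D : Type u'} [Category.{v'} D] [Abelian D] [HasExt.{w} C] [HasExt.{w'} D]
  [EnoughProjectives C] {F : C ⥤ D} {G : D ⥤ C}
  [PreservesFiniteLimits F] [G.Additive] [PreservesFiniteLimits G] [PreservesFiniteColimits G]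

theorem surjective_unit_comp_mapExactFunctor (adj : F ⊣ G) (X : C) (Y : D) (n : ℕ) :
    Function.Surjective fun y : Abelian.Ext (F.obj X) Y n =>
      (Ext.mk₀ (adj.unit.app X)).comp (y.mapExactFunctor G) (zero_add n) := by
  have := adj.left_adjoint_additive
  have := adj.leftAdjoint_preservesColimits
  induction n generalizing X with
  | zero =>
    intro x
    obtain ⟨u, rfl⟩ := (Ext.mk₀_bijective _ _).2 x
    refine ⟨Ext.mk₀ ((adj.homEquiv X Y).symm u), ?_⟩
    simp only [Ext.mapExactFunctor_mk₀, Ext.mk₀_comp_mk₀]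
    exact congrArg Ext.mk₀ ((adj.homEquiv_unit ..).symm.trans (Equiv.apply_symm_apply _ u))
  | succ n ih =>
    intro x
    let S := ShortComplex.mk _ _ (kernel.condition (Projective.π X))
    have hS : S.ShortExact := { exact := ShortComplex.exact_kernel (Projective.π X) }
    obtain ⟨x₁, rfl⟩ := Ext.contravariant_sequence_exact₃ hS _ x
      (Ext.eq_zero_of_projective (P := Projective.over X) _) (add_comm 1 n)
    obtain ⟨y : Abelian.Ext (S.map F).X₁ Y n, rfl⟩ := ih S.X₁ x₁
    have hunit : hS.extClass.comp (Ext.mk₀ (adj.unit.app S.X₁)) (add_zero 1) =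
        (Ext.mk₀ (adj.unit.app S.X₃)).comp ((hS.map_of_exact F).map_of_exact G).extClass
          (zero_add 1) :=
      hS.extClass_naturality ((hS.map_of_exact F).map_of_exact G) (S.mapNatTrans adj.unit)
    refine ⟨(hS.map_of_exact F).extClass.comp y (add_comm 1 n), ?_⟩
    calc (Ext.mk₀ (adj.unit.app S.X₃)).comp
          (((hS.map_of_exact F).extClass.comp y (add_comm 1 n)).mapExactFunctor G) (zero_add _)
        = (Ext.mk₀ (adj.unit.app S.X₃)).comp
          (((hS.map_of_exact F).map_of_exact G).extClass.comp (y.mapExactFunctor G)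
            (add_comm 1 n)) (zero_add _) := by
          rw [Ext.mapExactFunctor_comp, Ext.mapExactFunctor_extClass]; rfl
      _ = (hS.extClass.comp (Ext.mk₀ (adj.unit.app S.X₁)) (add_zero 1)).comp
          (y.mapExactFunctor G) (add_comm 1 n) := by
          rw [hunit]
          exact (Ext.comp_assoc _ _ _ (zero_add 1) (add_comm 1 n) (by lia)).symm
      _ = hS.extClass.comp ((Ext.mk₀ (adj.unit.app S.X₁)).comp (y.mapExactFunctor G)
            (zero_add n)) (add_comm 1 n) :=
          Ext.comp_assoc_of_second_deg_zero ..

theorem subsingleton_ext_of_adjunction (adj : F ⊣ G) (X : C) (Y : D) (n : ℕ)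
    [Subsingleton (Abelian.Ext (F.obj X) Y n)] : Subsingleton (Abelian.Ext X (G.obj Y) n) :=
  (surjective_unit_comp_mapExactFunctor adj X Y n).subsingleton

end Adjunction

section Derived
variable (R : Type*) [Ring R] [Linear R C]

theorem preservesFiniteLimits_linearYoneda_obj (Y : C) :
    PreservesFiniteLimits ((linearYoneda R C).obj Y) :=
  have : PreservesFiniteLimits ((linearYoneda R C).obj Y ⋙ forget (ModuleCat R)) :=
    inferInstanceAs (PreservesFiniteLimits (yoneda.obj Y))
  preservesFiniteLimits_of_reflects_of_preserves _ (forget (ModuleCat R))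

theorem subsingleton_derivedExt_iff [EnoughProjectives C] [HasExt.{w} C] (X Y : C) (n : ℕ) :
    Subsingleton (((_root_.Ext R C n).obj (op X)).obj Y) ↔ Subsingleton (Abelian.Ext X Y n) := by
  cases n with
  | zero =>
    have := preservesFiniteLimits_linearYoneda_obj R Y
    have := preservesFiniteColimits_rightOp ((linearYoneda R C).obj Y)
    let e := (((linearYoneda R C).obj Y).rightOp.leftDerivedZeroIsoSelf.app X).unop
    rw [Ext.homEquiv₀.subsingleton_congr]
    exact e.toLinearEquiv.toEquiv.subsingleton_congr.symm
  | succ n =>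
    let P := projectiveResolution X
    rw [(P.isoExt (R := R) (n + 1) Y).toLinearEquiv.toEquiv.subsingleton_congr,
      ← ModuleCat.isZero_iff_subsingleton, ← HomologicalComplex.exactAt_iff_isZero_homology,
      HomologicalComplex.exactAt_iff' _ n (n + 1) (n + 2) (by simp) (by simp),
      ShortComplex.moduleCat_exact_iff]
    constructor
    · intro h
      refine subsingleton_of_forall_eq 0 fun x => ?_
      obtain ⟨f, hf, rfl⟩ := P.extMk_surjective x (n + 2) rfl
      exact (P.extMk_eq_zero_iff f (n + 2) rfl hf n rfl).2 (h f hf)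
    · intro h f hf
      exact (P.extMk_eq_zero_iff f (n + 2) rfl hf n rfl).1 (Subsingleton.elim _ _)

end Derived

section ModuleCat

theorem subsingleton_ext_of_le_radical_annihilator {S : Type u} [CommRing S] [IsNoetherianRing S]
    (n : Ideal S) [n.IsMaximal] (Y : ModuleCat.{u} S) (i : ℕ)
    (h : Subsingleton (Abelian.Ext (ModuleCat.of S (S ⧸ n)) Y i))
    (N : Type u) [AddCommGroup N] [Module S N] [hN : Module.Finite S N]
    (hn : n ≤ (Module.annihilator S N).radical) :
    Subsingleton (Abelian.Ext (ModuleCat.of S N) Y i) := by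
  induction hN using IsNoetherianRing.induction_on_isQuotientEquivQuotientPrime S with
  | subsingleton N =>
    have hN : IsZero (ModuleCat.of S N) := ModuleCat.isZero_of_subsingleton _
    exact subsingleton_ext_of_retract_left ⟨0, 0, hN.eq_of_src _ _⟩ Y i
      (X' := ModuleCat.of S (S ⧸ n))
  | quotient N p e =>
    rw [e.annihilator_eq, Ideal.annihilator_quotient, p.2.radical] at hn
    obtain rfl := Ideal.IsMaximal.eq_of_le ‹_› p.2.ne_top hn
    exact subsingleton_ext_of_retract_left e.toModuleIso.retract Y i
  | exact N₁ N₂ N₃ f g hf hg hfg h₁ h₃ =>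
    have := h₁ (hn.trans (Ideal.radical_mono (LinearMap.annihilator_le_of_injective f hf)))
    have := h₃ (hn.trans (Ideal.radical_mono (LinearMap.annihilator_le_of_surjective g hg)))
    exact subsingleton_ext_of_shortExact (ModuleCat.shortComplex_shortExact
      (ModuleCat.shortComplexOfCompEqZero f g hfg.linearMap_comp_eq_zero) hfg hf hg) Y i

variable {R S : Type u} [CommRing R] [CommRing S] (f : R →+* S)

open TensorProduct in
theorem subsingleton_ext_extendScalars_quotient [IsNoetherianRing S] (m : Ideal R) (n : Ideal S)
    [n.IsMaximal] (hmn : n ≤ (m.map f).radical) (Y : ModuleCat.{u} S) (i : ℕ)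
    (h : Subsingleton (Abelian.Ext (ModuleCat.of S (S ⧸ n)) Y i)) :
    Subsingleton (Abelian.Ext
      ((ModuleCat.extendScalars f).obj (ModuleCat.of R (R ⧸ m))) Y i) := by
  algebraize [f]
  have hann : Module.annihilator S (S ⊗[R] (R ⧸ m)) = m.map f := by
    rw [← (Algebra.TensorProduct.quotIdealMapEquivTensorQuot S m).toLinearEquiv.annihilator_eq,
      Ideal.annihilator_quotient]
    rfl
  exact subsingleton_ext_of_le_radical_annihilator n Y i h (S ⊗[R] (R ⧸ m)) (hann ▸ hmn)

theorem subsingleton_ext_restrictScalars [IsNoetherianRing S] (hf : f.Flat) (m : Ideal R)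
    (n : Ideal S) [n.IsMaximal] (hmn : n ≤ (m.map f).radical) (Y : ModuleCat.{u} S) (i : ℕ)
    (h : Subsingleton (Abelian.Ext (ModuleCat.of S (S ⧸ n)) Y i)) :
    Subsingleton (Abelian.Ext (ModuleCat.of R (R ⧸ m))
      ((ModuleCat.restrictScalars.{u} f).obj Y) i) :=
  have := ModuleCat.preservesFiniteLimits_extendScalars_of_flat hf
  have := subsingleton_ext_extendScalars_quotient f m n hmn Y i h
  subsingleton_ext_of_adjunction (ModuleCat.extendRestrictScalarsAdj f) _ Y i

/-- The semilinear maps `s` and `r` exhibit the `R`-module `N` as a direct summand of the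
restriction of scalars of the `S`-module `Y`. Mathlib has no maps semilinear in the direction of
`r`, hence the separate hypothesis `hr`. -/
noncomputable def retractRestrictScalars {N Y : Type u} [AddCommGroup N] [Module R N]
    [AddCommGroup Y] [Module S Y] (s : N →ₛₗ[f] Y) (r : Y →+ N)
    (hr : ∀ a y, r (f a • y) = a • r y) (hrs : ∀ x, r (s x) = x) :
    Retract (ModuleCat.of R N) ((ModuleCat.restrictScalars f).obj (ModuleCat.of S Y)) where
  i := ModuleCat.ofHom (Y := (ModuleCat.restrictScalars f).obj (ModuleCat.of S Y))
    { s with map_smul' := s.map_smulₛₗ }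
  r := ModuleCat.ofHom (X := (ModuleCat.restrictScalars f).obj (ModuleCat.of S Y))
    { r with map_smul' := hr }
  retract := by ext x; exact hrs x

end ModuleCat

end Ext

/-! ### The substitution `x_i ↦ x_i ^ p` -/

theorem flat_of_dual_family {R S ι : Type*} [CommRing R] [CommRing S] [Fintype ι] (f : R →+* S)
    (e : ι → S) (ρ : ι → S →+ R) (hρ : ∀ j a s, ρ j (f a * s) = a * ρ j s)
    (h : ∀ s, ∑ j, f (ρ j s) * e j = s) : f.Flat := by
  algebraize [f]
  have hf (a : R) : algebraMap R S a = f a := rfl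
  let p : S →ₗ[R] ι → R :=
    { toFun s j := ρ j s
      map_add' x y := by ext j; simp
      map_smul' a x := by ext j; simp [Algebra.smul_def, hf, hρ] }
  refine Module.Flat.of_retract p (Fintype.linearCombination R e) ?_
  ext s
  simp [p, Fintype.linearCombination_apply, Algebra.smul_def, hf, h]

section Decimate
variable {σ R : Type*} {p : ℕ}

theorem eq_nsmul_add_iff_of_lt {a b : σ →₀ ℕ} (hb : ∀ i, b i < p) (c : σ →₀ ℕ) :
    b = p • c + a ↔ b = a ∧ c = 0 := by
  constructor
  · rintro rfl
    suffices c = 0 by simp [this]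
    ext i
    by_contra hc
    exact (hb i).not_ge ((Nat.le_mul_of_pos_right p (Nat.pos_of_ne_zero hc)).trans
      (Nat.le_add_right _ (a i)))
  · rintro ⟨rfl, rfl⟩
    simp

variable [NeZero p]

theorem nsmul_le_nsmul_add_iff_of_lt {a : σ →₀ ℕ} (ha : ∀ i, a i < p) (d c : σ →₀ ℕ) :
    p • d ≤ p • c + a ↔ d ≤ c := by
  simp only [Finsupp.le_def, Finsupp.add_apply, Finsupp.smul_apply, smul_eq_mul]
  refine forall_congr' fun i => ?_
  rw [mul_comm, ← Nat.le_div_iff_mul_le (NeZero.pos p), Nat.mul_add_div (NeZero.pos p),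
    Nat.div_eq_of_lt (ha i), add_zero]

theorem exists_eq_nsmul_add (b : σ →₀ ℕ) : ∃ c a : σ →₀ ℕ, (∀ i, a i < p) ∧ b = p • c + a :=
  ⟨b.mapRange (· / p) (Nat.zero_div p), b.mapRange (· % p) (Nat.zero_mod p),
    fun i => Nat.mod_lt _ (NeZero.pos p), by ext i; exact (Nat.div_add_mod (b i) p).symm⟩

section CommSemiring
variable [CommSemiring R]

/-- The additive map sending `r x^(p c + a)` to `r x^c` and every monomial with exponent not of the
form `p c + a` to `0`. For `a` with all entries less than `p`, it is the coordinate of `x^a` in the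
basis of `R[x]` over its subring `R[x^p]` that such monomials form. -/
noncomputable def decimate (p : ℕ) [NeZero p] (a : σ →₀ ℕ) :
    MvPolynomial σ R →+ MvPolynomial σ R :=
  AddMonoidAlgebra.comapDomainAddMonoidHom (fun c => p • c + a)
    ((add_left_injective a).comp (smul_right_injective _ (NeZero.ne p)))

theorem coeff_decimate (a c : σ →₀ ℕ) (h : MvPolynomial σ R) :
    coeff c (decimate p a h) = coeff (p • c + a) h :=
  rfl

theorem decimate_expand_mul {a : σ →₀ ℕ} (ha : ∀ i, a i < p) (g h : MvPolynomial σ R) :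
    decimate p a (expand p g * h) = g * decimate p a h := by
  induction g using MvPolynomial.induction_on' with
  | add g g' hg hg' => rw [map_add, add_mul, map_add, hg, hg', add_mul]
  | monomial d r =>
    ext c
    simp only [coeff_decimate, expand_monomial, coeff_monomial_mul',
      nsmul_le_nsmul_add_iff_of_lt ha]
    split_ifs with hdc
    · obtain ⟨e, rfl⟩ := exists_add_of_le hdc
      rw [smul_add, add_assoc, add_tsub_cancel_left, add_tsub_cancel_left]
    · rfl

theorem decimate_monomial_of_lt [DecidableEq σ] {a b : σ →₀ ℕ} (hb : ∀ i, b i < p) :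
    decimate p a (monomial b (1 : R)) = if b = a then 1 else 0 := by
  ext c
  simp only [coeff_decimate, coeff_monomial, eq_nsmul_add_iff_of_lt hb, ite_and]
  split_ifs <;> simp_all [coeff_one, eq_comm]

theorem sum_expand_decimate_mul_monomial [Fintype {a : σ →₀ ℕ // ∀ i, a i < p}]
    (h : MvPolynomial σ R) :
    ∑ a : {a : σ →₀ ℕ // ∀ i, a i < p}, expand p (decimate p a h) * monomial a 1 = h := by
  classical
  induction h using MvPolynomial.induction_on' with
  | add g h hg hh => simp only [map_add, add_mul, Finset.sum_add_distrib, hg, hh]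
  | monomial b t =>
    obtain ⟨c, b, hb, rfl⟩ := exists_eq_nsmul_add (p := p) b
    have hmon : monomial (p • c + b) t = expand p (monomial c t) * monomial b 1 := by
      rw [expand_monomial, monomial_mul, mul_one]
    rw [hmon, Fintype.sum_eq_single ⟨b, hb⟩]
    · rw [decimate_expand_mul hb, decimate_monomial_of_lt hb, if_pos rfl, mul_one]
    · intro a ha
      rw [decimate_expand_mul a.2, decimate_monomial_of_lt hb,
        if_neg fun hba => ha (Subtype.ext hba.symm), mul_zero, map_zero, zero_mul]

end CommSemiring

theorem flat_expand [Finite σ] [CommRing R] :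
    (expand p : MvPolynomial σ R →ₐ[R] MvPolynomial σ R).toRingHom.Flat := by
  have : Finite {a : σ →₀ ℕ // ∀ i, a i < p} :=
    Finite.of_injective (fun a i => (⟨a.1 i, a.2 i⟩ : Fin p)) fun a b hab =>
      Subtype.ext (Finsupp.ext fun i => congrArg Fin.val (congrFun hab i))
  have := Fintype.ofFinite {a : σ →₀ ℕ // ∀ i, a i < p}
  exact flat_of_dual_family _ _ _ (fun a => decimate_expand_mul a.2)
    sum_expand_decimate_mul_monomial

end Decimate

section VariableIdeal
variable {σ R K : Type*}

theorem isMaximal_idealOfVars [Field K] : (idealOfVars σ K).IsMaximal := by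
  have hker : idealOfVars σ K = RingHom.ker constantCoeff := by
    ext g
    rw [← pow_one (idealOfVars σ K), mem_pow_idealOfVars_iff', RingHom.mem_ker]
    simp [constantCoeff_eq, Finsupp.degree_eq_zero_iff]
  rw [hker]
  exact RingHom.ker_isMaximal_of_surjective _ fun x => ⟨C x, constantCoeff_C σ x⟩

theorem idealOfVars_le_radical_map_expand [CommRing R] (p : ℕ) :
    idealOfVars σ R ≤ ((idealOfVars σ R).map (expand p).toRingHom).radical := by
  refine Ideal.span_le.2 ?_
  rintro _ ⟨i, rfl⟩
  refine ⟨p, ?_⟩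
  rw [← expand_X]
  exact Ideal.mem_map_of_mem (expand p).toRingHom (Ideal.subset_span ⟨i, rfl⟩)

end VariableIdeal

/-! ### Colon ideals of squarefree monomial ideals -/

section MonomialIdeal
variable {σ R : Type*} [CommSemiring R]

theorem mul_monomial_mem_span_iff (S : Set (σ →₀ ℕ)) (a : σ →₀ ℕ) (g : MvPolynomial σ R) :
    g * monomial a 1 ∈ Ideal.span ((fun s => monomial s (1 : R)) '' S) ↔
      ∀ c ∈ g.support, ∃ s ∈ S, s ≤ c + a := by
  rw [mem_ideal_span_monomial_image]
  simp only [mem_support_iff]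
  constructor
  · intro h c hc
    exact h (c + a) (by rwa [coeff_mul_monomial, mul_one])
  · intro h b hb
    rw [coeff_mul_monomial'] at hb
    obtain ⟨hab, hb⟩ := ite_ne_right_iff.1 hb
    rw [mul_one] at hb
    simpa [tsub_add_cancel_of_le hab] using h _ hb

variable {p : ℕ} [NeZero p]

theorem le_nsmul_add_iff_of_le_one {s : σ →₀ ℕ} (hs : ∀ i, s i ≤ 1) (c a : σ →₀ ℕ) :
    s ≤ p • c + a ↔ s ≤ c + a := by
  simp only [Finsupp.le_def, Finsupp.add_apply, Finsupp.smul_apply, smul_eq_mul]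
  refine forall_congr' fun i => ?_
  have := hs i
  rcases (c i).eq_zero_or_pos with hc | hc
  · rw [hc, mul_zero]
  · have := Nat.mul_pos (NeZero.pos p) hc
    lia

theorem expand_mul_monomial_mem_span {S : Set (σ →₀ ℕ)} (hS : ∀ s ∈ S, ∀ i, s i ≤ 1)
    {a : σ →₀ ℕ} {g : MvPolynomial σ R}
    (hg : g * monomial a 1 ∈ Ideal.span ((fun s => monomial s (1 : R)) '' S)) :
    expand p g * monomial a 1 ∈ Ideal.span ((fun s => monomial s (1 : R)) '' S) := by
  classical
  rw [mul_monomial_mem_span_iff] at hg ⊢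
  intro b hb
  obtain ⟨c, hc, rfl⟩ := Finset.mem_image.1 (support_expand_subset g hb)
  obtain ⟨s, hs, hsc⟩ := hg c hc
  exact ⟨s, hs, (le_nsmul_add_iff_of_le_one (hS s hs) c a).2 hsc⟩

theorem decimate_mul_monomial_mem_span {S : Set (σ →₀ ℕ)} (hS : ∀ s ∈ S, ∀ i, s i ≤ 1)
    (a : σ →₀ ℕ) {h : MvPolynomial σ R}
    (hh : h ∈ Ideal.span ((fun s => monomial s (1 : R)) '' S)) :
    decimate p a h * monomial a 1 ∈ Ideal.span ((fun s => monomial s (1 : R)) '' S) := by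
  rw [mem_ideal_span_monomial_image] at hh
  rw [mul_monomial_mem_span_iff]
  intro c hc
  rw [mem_support_iff, coeff_decimate, ← mem_support_iff] at hc
  obtain ⟨s, hs, hsc⟩ := hh _ hc
  exact ⟨s, hs, (le_nsmul_add_iff_of_le_one (hS s hs) c a).1 hsc⟩

end MonomialIdeal

section Colon
universe u v
variable {σ : Type u} {R : Type v}

/-- For `I` generated by squarefree monomials, `R[x]/(I : x^a)` is a direct summand of `R[x]/I`
restricted along `x_i ↦ x_i ^ p`: the inclusion is induced by `g ↦ expand p g * x^a` and the
projection by `decimate p a`. -/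
noncomputable def colonRetract [CommRing R] {p : ℕ} [NeZero p] {S : Set (σ →₀ ℕ)}
    (hS : ∀ s ∈ S, ∀ i, s i ≤ 1) {a : σ →₀ ℕ} (ha : ∀ i, a i < p)
    {I : Ideal (MvPolynomial σ R)} (hI : I = Ideal.span ((fun s => monomial s 1) '' S)) :
    Retract
      (ModuleCat.of (MvPolynomial σ R)
        (MvPolynomial σ R ⧸ I.colon (Ideal.span {monomial a (1 : R)})))
      ((ModuleCat.restrictScalars
        (expand p : MvPolynomial σ R →ₐ[R] MvPolynomial σ R).toRingHom).obj
        (ModuleCat.of (MvPolynomial σ R) (MvPolynomial σ R ⧸ I))) :=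
  retractRestrictScalars _
    (Submodule.liftQ _
      { toFun g := Ideal.Quotient.mk I (expand p g * monomial a 1)
        map_add' x y := by rw [map_add, add_mul, map_add]
        map_smul' x y := by
          rw [smul_eq_mul, map_mul (expand p), mul_assoc]
          rfl }
      fun g hg => Ideal.Quotient.eq_zero_iff_mem.2 <| by
        subst hI
        exact expand_mul_monomial_mem_span hS (Ideal.mem_colon_span_singleton.1 hg))
    (QuotientAddGroup.map I.toAddSubgroup (I.colon (Ideal.span {monomial a (1 : R)})).toAddSubgroup
      (decimate p a) fun h hh => by
        subst hI
        exact Ideal.mem_colon_span_singleton.2 (decimate_mul_monomial_mem_span hS a hh))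
    (fun g y => by
      obtain ⟨y, rfl⟩ := Submodule.Quotient.mk_surjective _ y
      exact congrArg (Ideal.Quotient.mk _) (decimate_expand_mul ha g y))
    (fun x => by
      classical
      obtain ⟨x, rfl⟩ := Submodule.Quotient.mk_surjective _ x
      refine congrArg (Ideal.Quotient.mk _) ((decimate_expand_mul ha x _).trans ?_)
      rw [decimate_monomial_of_lt ha, if_pos rfl, mul_one])

theorem subsingleton_ext_quotient_colon [Finite σ] [Field R] {S : Set (σ →₀ ℕ)}
    (hS : ∀ s ∈ S, ∀ i, s i ≤ 1) (a : σ →₀ ℕ)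
    {I : Ideal (MvPolynomial σ R)} (hI : I = Ideal.span ((fun s => monomial s 1) '' S)) (i : ℕ)
    (h : Subsingleton (Abelian.Ext
      (ModuleCat.of (MvPolynomial σ R) (MvPolynomial σ R ⧸ idealOfVars σ R))
      (ModuleCat.of (MvPolynomial σ R) (MvPolynomial σ R ⧸ I)) i)) :
    Subsingleton (Abelian.Ext
      (ModuleCat.of (MvPolynomial σ R) (MvPolynomial σ R ⧸ idealOfVars σ R))
      (ModuleCat.of (MvPolynomial σ R)
        (MvPolynomial σ R ⧸ I.colon (Ideal.span {monomial a (1 : R)}))) i) := by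
  have ha (j : σ) : a j < a.degree + 1 := Nat.lt_succ_of_le (Finsupp.le_degree j a)
  have := isMaximal_idealOfVars (σ := σ) (K := R)
  have := subsingleton_ext_restrictScalars _ flat_expand (idealOfVars σ R) (idealOfVars σ R)
    (idealOfVars_le_radical_map_expand (a.degree + 1)) _ i h
  exact subsingleton_ext_of_retract_right _ (colonRetract hS ha hI) i

end Colon

theorem stmt0_general (K : Type) [Field K] (n : ℕ) (I : Ideal (MvPoly K (Fin n)))
    (hI : IsSqfreeMonomialIdeal K I)
    (a : Fin n →₀ ℕ) (f : MvPoly K (Fin n)) (hf : f = mono K a) :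
    depthQ K (Fin n) (I.colon (Ideal.span {f})) ≥ depthQ K (Fin n) I := by
  obtain ⟨S, hS, hI⟩ := hI
  subst hf
  refine sInf_le_sInf ?_
  rintro _ ⟨i, rfl, hi⟩
  refine ⟨i, rfl, ?_⟩
  rw [← not_subsingleton_iff_nontrivial, subsingleton_derivedExt_iff] at hi ⊢
  exact fun h => hi (subsingleton_ext_quotient_colon hS a hI i h)

/-- if `I` is a squarefree monomial ideal and `f` a squarefree monomial,
then `depth R/(I : f) ≥ depth R/I`. -/
theorem stmt0 (K : Type) [Field K] (n : ℕ) (I : Ideal (MvPoly K (Fin n)))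
    (hI : IsSqfreeMonomialIdeal K I)
    (a : Fin n →₀ ℕ) (ha : SqfreeExp a) (f : MvPoly K (Fin n)) (hf : f = mono K a) :
    depthQ K (Fin n) (I.colon (Ideal.span {f})) ≥ depthQ K (Fin n) I :=
  stmt0_general K n I hI a f hf
end

section
/- Let I(C) ⊆ R be the edge ideal of a clutter C and let f = x_{i_1}⋯x_{i_k} be a squarefree monomial of R. Then: (i) ((I(C)^∨ : f))^∨ = I(C \ {x_{i_1},…,x_{i_k}}); (ii) ((I(C) : f))^∨ = I(C^∨ \ {x_{i_1},…,x_{i_k}}); (iii) for a single variable x_i, (I(C) + (x_i))^∨ = x_i · I(C \ {x_i})^∨. -/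
/-!
Inside `I(C)` the squarefree monomials are the `x_s` with `s` containing an edge of `C`, and the
up-set of these `s` determines `I(C)`. Alexander duality turns an up-set `U` into `{s | sᶜ ∉ U}`:
a set is a vertex cover iff its complement contains no edge. The monomial `x_s` lies in
`(I(C) : x_T)` iff `s ∪ T` contains an edge, and `s` contains an edge of `C \ T` iff `s \ T`
contains an edge of `C`, so the colon formulas are De Morgan's law `(sᶜ ∪ T)ᶜ = s \ T`. The monomial
`x_s` lies in `I(C) + (x_i : i ∈ T)` iff `s` contains an edge or meets `T`; hence the dual is
generated by the `x_s` with `T ⊆ s` and `s` a cover of `C`, equivalently of `C \ T`. Factoring out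
`x_T` leaves the minimal covers of `C \ T`, which are disjoint from `T`.
-/

open MvPolynomial CategoryTheory Opposite

noncomputable section

variable (K : Type) [Field K] (σ : Type)

variable {n : ℕ}

/-- A clutter on the vertex set `Fin n`: a family of edges none of which contains another. -/
structure Clutter (n : ℕ) where
  edges : Finset (Finset (Fin n))
  antichain : ∀ e ∈ edges, ∀ f ∈ edges, e ⊆ f → e = f

namespace Clutter

variable {n : ℕ}

/-- The edge ideal of a clutter, generated by the squarefree monomials
`x_e = ∏_{i ∈ e} x_i` for the edges `e`. -/
def edgeIdeal (K : Type) [Field K] (C : Clutter n) : Ideal (MvPoly K (Fin n)) :=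
  Ideal.span ((fun e : Finset (Fin n) => ∏ i ∈ e, (MvPolynomial.X i : MvPoly K (Fin n))) ''
    ↑C.edges)

/-- `c` is a vertex cover of `C`: it meets every edge. -/
def IsCover (C : Clutter n) (c : Finset (Fin n)) : Prop :=
  ∀ e ∈ C.edges, ∃ i ∈ e, i ∈ c

/-- `c` is a minimal vertex cover of `C`. -/
def IsMinCover (C : Clutter n) (c : Finset (Fin n)) : Prop :=
  IsCover C c ∧ ∀ d ⊆ c, IsCover C d → d = c

open Classical in
/-- The clutter of minimal vertex covers (the Alexander dual clutter `C^∨`). -/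
def dual (C : Clutter n) : Clutter n where
  edges := Finset.univ.filter fun c => IsMinCover C c
  antichain := by
    intro e he f hf hef
    simp only [Finset.mem_filter] at he hf
    exact hf.2.2 e hef he.2.1

/-- The ideal of covers (Alexander dual ideal) of a clutter: the edge ideal of `C^∨`. -/
def coverIdeal (K : Type) [Field K] (C : Clutter n) : Ideal (MvPoly K (Fin n)) :=
  edgeIdeal K (dual C)

open Classical in
/-- Deletion `C ∖ V`: delete all edges of `C` that intersect `V`. -/
def del (C : Clutter n) (V : Finset (Fin n)) : Clutter n where
  edges := C.edges.filter fun e => ∀ i ∈ V, i ∉ e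
  antichain := by
    intro e he f hf hef
    simp only [Finset.mem_filter] at he hf
    exact C.antichain e he.1 f hf.1 hef

/-- All minimal vertex covers of `C` have the same cardinality. -/
def Unmixed (C : Clutter n) : Prop :=
  ∀ c d, IsMinCover C c → IsMinCover C d → c.card = d.card

/-- All edges of `C` have the same cardinality. -/
def Uniform (C : Clutter n) : Prop :=
  ∀ e ∈ C.edges, ∀ f ∈ C.edges, e.card = f.card

/-- The set covering polyhedron `Q(A) = {x ∈ ℝ^n : x ≥ 0, xA ≥ 1}` of the clutter. -/
def coverPolyhedron (C : Clutter n) : Set (Fin n → ℝ) :=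
  { x | (∀ i, 0 ≤ x i) ∧ ∀ e ∈ C.edges, 1 ≤ ∑ i ∈ e, x i }

/-- The set covering polyhedron is integral: all of its vertices (extreme points)
have integer coordinates. -/
def IntegralPolyhedron (C : Clutter n) : Prop :=
  ∀ x ∈ Set.extremePoints ℝ (coverPolyhedron C), ∀ i, ∃ z : ℤ, x i = (z : ℝ)

open Classical in
/-- The max-flow min-cut property: for every nonnegative integral vector `α` both sides of
the LP-duality equation `min{⟨α,x⟩ : x ≥ 0, xA ≥ 1} = max{⟨y,1⟩ : y ≥ 0, Ay ≤ α}`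
have integral optimum solutions. -/
def HasMFMC (C : Clutter n) : Prop :=
  ∀ α : Fin n → ℕ,
    ∃ x : Fin n → ℕ,
      ((fun i => (x i : ℝ)) ∈ coverPolyhedron C ∧
        ∀ z ∈ coverPolyhedron C, ∑ i, (α i : ℝ) * x i ≤ ∑ i, (α i : ℝ) * z i) ∧
    ∃ y : Finset (Fin n) → ℕ,
      ((∀ e, e ∉ C.edges → y e = 0) ∧
        (∀ i, ∑ e ∈ C.edges.filter (fun e => i ∈ e), y e ≤ α i) ∧
        (∀ y' : Finset (Fin n) → ℝ, (∀ e, 0 ≤ y' e) → (∀ e, e ∉ C.edges → y' e = 0) →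
          (∀ i, ∑ e ∈ C.edges.filter (fun e => i ∈ e), y' e ≤ (α i : ℝ)) →
          ∑ e ∈ C.edges, y' e ≤ ∑ e ∈ C.edges, (y e : ℝ))) ∧
      (∑ i, (α i : ℝ) * x i = ∑ e ∈ C.edges, (y e : ℝ))

end Clutter

open Classical in
/-- The unique clutter whose edge ideal is a given squarefree monomial ideal `I`:
its edges are the minimal supports of squarefree monomials belonging to `I`. -/
def clutterOf (K : Type) [Field K] {n : ℕ} (I : Ideal (MvPoly K (Fin n))) : Clutter n where
  edges := Finset.univ.filter fun e =>
    ((∏ i ∈ e, MvPolynomial.X i : MvPoly K (Fin n)) ∈ I ∧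
      ∀ f ⊆ e, (∏ i ∈ f, MvPolynomial.X i : MvPoly K (Fin n)) ∈ I → f = e)
  antichain := by
    intro e he f hf hef
    simp only [Finset.mem_filter] at he hf
    exact hf.2.2 e hef he.2.1

/-- The Alexander dual of a squarefree monomial ideal. -/
def idealDual (K : Type) [Field K] {n : ℕ} (I : Ideal (MvPoly K (Fin n))) :
    Ideal (MvPoly K (Fin n)) :=
  Clutter.coverIdeal K (clutterOf K I)

end

lemma minimal_iff_forall_le_imp_eq {α : Type*} [PartialOrder α] {P : α → Prop} {a : α} :
    Minimal P a ↔ P a ∧ ∀ b ≤ a, P b → b = a := by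
  rw [minimal_iff]
  exact and_congr_right fun _ ↦ forall_congr' fun _ ↦ by rw [imp.swap, eq_comm]

lemma mem_upperClosure_setOf_minimal_iff {α : Type*} [Preorder α] [WellFoundedLT α] {P : α → Prop}
    (hP : IsUpperSet {a | P a}) {a : α} : a ∈ upperClosure {b | Minimal P b} ↔ P a := by
  refine ⟨fun ⟨b, hb, hba⟩ ↦ hP hba hb.prop, fun ha ↦ ?_⟩
  obtain ⟨b, hba, hb⟩ := exists_minimal_le_of_wellFoundedLT P a ha
  exact ⟨b, hb, hba⟩

section SqfreeSpan

/-- The squarefree monomial ideal generated by the `x_e = ∏ i ∈ e, X i` with `e ∈ S`. It is the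
edge ideal when `S` is the edge set of a clutter; here `S` need not be an antichain, because the
generators of sums and products of ideals may be redundant. -/
noncomputable def sqfreeSpan {σ : Type*} (R : Type*) [CommSemiring R] (S : Set (Finset σ)) :
    Ideal (MvPolynomial σ R) :=
  Ideal.span ((fun e ↦ ∏ i ∈ e, X i) '' S)

variable {σ R : Type*} [CommSemiring R] {S T : Set (Finset σ)}

lemma indicator_one_le_iff {s : Finset σ} {a : σ →₀ ℕ} :
    Finsupp.indicator s (fun _ _ ↦ 1) ≤ a ↔ s ⊆ a.support := by
  classical
  simp only [Finsupp.le_def, Finsupp.indicator_apply, Finset.subset_iff, Finsupp.mem_support_iff]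
  refine forall_congr' fun i ↦ ?_
  by_cases hi : i ∈ s <;> simp [hi, Nat.one_le_iff_ne_zero]

lemma support_indicator_one (s : Finset σ) :
    (Finsupp.indicator s fun _ _ ↦ 1 : σ →₀ ℕ).support = s :=
  (Finsupp.support_indicator_subset _ _).antisymm (indicator_one_le_iff.1 le_rfl)

lemma prod_X_eq_monomial_indicator (s : Finset σ) :
    (∏ i ∈ s, X i : MvPolynomial σ R) = monomial (Finsupp.indicator s fun _ _ ↦ 1) 1 := by
  rw [Finsupp.indicator_eq_sum_single s fun _ ↦ 1, monomial_sum_one]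
  rfl

lemma monomial_mem_sqfreeSpan_iff {a : σ →₀ ℕ} {r : R} (hr : r ≠ 0) :
    monomial a r ∈ sqfreeSpan R S ↔ a.support ∈ upperClosure S := by
  have hspan : sqfreeSpan R S = Ideal.span ((fun b ↦ monomial b (1 : R)) ''
      ((fun e ↦ Finsupp.indicator e fun _ _ ↦ 1) '' S)) := by
    simp only [sqfreeSpan, Set.image_image, prod_X_eq_monomial_indicator]
  classical
  rw [hspan, mem_ideal_span_monomial_image, support_monomial, if_neg hr]
  simp only [Finset.mem_singleton, forall_eq, Set.exists_mem_image, indicator_one_le_iff,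
    mem_upperClosure]

lemma prod_X_mem_sqfreeSpan_iff [Nontrivial R] {s : Finset σ} :
    (∏ i ∈ s, X i) ∈ sqfreeSpan R S ↔ s ∈ upperClosure S := by
  rw [prod_X_eq_monomial_indicator, monomial_mem_sqfreeSpan_iff one_ne_zero, support_indicator_one]

lemma prod_X_mul_prod_X_mem_sqfreeSpan_iff [Nontrivial R] [DecidableEq σ] {s t : Finset σ} :
    (∏ i ∈ s, X i) * (∏ i ∈ t, X i) ∈ sqfreeSpan R S ↔ s ∪ t ∈ upperClosure S := by
  rw [prod_X_eq_monomial_indicator, prod_X_eq_monomial_indicator, monomial_mul, mul_one,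
    monomial_mem_sqfreeSpan_iff one_ne_zero, Finsupp.support_add_eq_union, support_indicator_one,
    support_indicator_one]

lemma sqfreeSpan_le_sqfreeSpan_iff [Nontrivial R] :
    sqfreeSpan R S ≤ sqfreeSpan R T ↔ upperClosure T ≤ upperClosure S := by
  have hle : sqfreeSpan R S ≤ sqfreeSpan R T ↔ S ⊆ upperClosure T := by
    rw [sqfreeSpan, Ideal.span_le, Set.image_subset_iff]
    exact forall₂_congr fun _ _ ↦ prod_X_mem_sqfreeSpan_iff
  rw [hle]
  exact ⟨fun h ↦ upperClosure_min h (upperClosure T).upper, subset_upperClosure.trans⟩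

lemma sqfreeSpan_eq_sqfreeSpan_iff [Nontrivial R] :
    sqfreeSpan R S = sqfreeSpan R T ↔ upperClosure S = upperClosure T := by
  rw [le_antisymm_iff, sqfreeSpan_le_sqfreeSpan_iff, sqfreeSpan_le_sqfreeSpan_iff, and_comm,
    ← le_antisymm_iff]

lemma sqfreeSpan_add_span_X_image (V : Set σ) :
    sqfreeSpan R S + Ideal.span (X '' V) = sqfreeSpan R (S ∪ singleton '' V) := by
  simp only [sqfreeSpan, Set.image_union, Set.image_image, Finset.prod_singleton, Ideal.span_union,
    Submodule.add_eq_sup]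

lemma span_prod_X_mul_sqfreeSpan [DecidableEq σ] {t : Finset σ} (h : ∀ e ∈ S, Disjoint t e) :
    Ideal.span {∏ i ∈ t, X i} * sqfreeSpan R S = sqfreeSpan R ((t ∪ ·) '' S) := by
  rw [sqfreeSpan, sqfreeSpan, Ideal.span_mul_span', Set.singleton_mul, Set.image_image,
    Set.image_image]
  exact congrArg Ideal.span (Set.image_congr fun e he ↦ (Finset.prod_union (h e he)).symm)

lemma mem_upperClosure_image_union_iff [DecidableEq σ] {s t : Finset σ} :
    s ∈ upperClosure ((t ∪ ·) '' S) ↔ t ⊆ s ∧ s ∈ upperClosure S := by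
  simp only [mem_upperClosure, Set.exists_mem_image, Finset.union_subset_iff, ← exists_and_left,
    and_left_comm]

lemma isUpperSet_setOf_prod_X_mem (I : Ideal (MvPolynomial σ R)) :
    IsUpperSet {s : Finset σ | ∏ i ∈ s, X i ∈ I} :=
  fun _ _ hst hs ↦ I.mem_of_dvd (Finset.prod_dvd_prod_of_subset _ _ _ hst) hs

end SqfreeSpan

namespace Clutter

variable {n : ℕ} {C : Clutter n} {s T : Finset (Fin n)}

/-- The up-set of dependent vertex sets, i.e. of those containing an edge. These are the supports of
the monomials in the edge ideal. -/
def dependentSets (C : Clutter n) : UpperSet (Finset (Fin n)) :=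
  upperClosure C.edges

lemma mem_dependentSets : s ∈ C.dependentSets ↔ ∃ e ∈ C.edges, e ⊆ s :=
  mem_upperClosure

lemma isCover_iff_compl_notMem_dependentSets : C.IsCover s ↔ sᶜ ∉ C.dependentSets := by
  simp [IsCover, mem_dependentSets, Finset.not_subset]

lemma isUpperSet_setOf_isCover (C : Clutter n) : IsUpperSet {c | C.IsCover c} :=
  fun _ _ hcd hc e he ↦ (hc e he).imp fun _ ⟨hie, hic⟩ ↦ ⟨hie, hcd hic⟩

lemma mem_edges_dual {c : Finset (Fin n)} : c ∈ C.dual.edges ↔ C.IsMinCover c := by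
  simp only [dual, Finset.mem_filter_univ]

lemma coe_edges_dual (C : Clutter n) : (C.dual.edges : Set (Finset (Fin n))) =
    {c | Minimal C.IsCover c} := by
  ext c
  exact mem_edges_dual.trans minimal_iff_forall_le_imp_eq.symm

lemma mem_dependentSets_dual : s ∈ C.dual.dependentSets ↔ sᶜ ∉ C.dependentSets := by
  rw [dependentSets, coe_edges_dual, mem_upperClosure_setOf_minimal_iff C.isUpperSet_setOf_isCover,
    isCover_iff_compl_notMem_dependentSets]

lemma mem_dependentSets_del : s ∈ (C.del T).dependentSets ↔ s \ T ∈ C.dependentSets := by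
  simp only [mem_dependentSets, del, Finset.mem_filter, Finset.subset_sdiff,
    Finset.disjoint_right, and_assoc]
  exact exists_congr fun _ ↦ and_congr_right fun _ ↦ and_comm

lemma IsCover.sdiff_of_del {c : Finset (Fin n)} (hc : (C.del T).IsCover c) :
    (C.del T).IsCover (c \ T) := by
  intro e he
  obtain ⟨i, hie, hic⟩ := hc e he
  have hiT : i ∉ T := fun hiT ↦ (Finset.mem_filter.1 he).2 i hiT hie
  exact ⟨i, hie, Finset.mem_sdiff.2 ⟨hic, hiT⟩⟩

lemma IsMinCover.disjoint_of_del {c : Finset (Fin n)} (hc : (C.del T).IsMinCover c) :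
    Disjoint c T :=
  Finset.sdiff_eq_self_iff_disjoint.1 (hc.2 _ Finset.sdiff_subset hc.1.sdiff_of_del)

end Clutter

section IdealDual

variable {K : Type} [Field K] {n : ℕ}

lemma mem_edges_clutterOf {I : Ideal (MvPoly K (Fin n))} {s : Finset (Fin n)} :
    s ∈ (clutterOf K I).edges ↔ ∏ i ∈ s, X i ∈ I ∧ ∀ t ⊆ s, ∏ i ∈ t, X i ∈ I → t = s := by
  simp only [clutterOf, Finset.mem_filter_univ]

lemma coe_edges_clutterOf (I : Ideal (MvPoly K (Fin n))) :
    ((clutterOf K I).edges : Set (Finset (Fin n))) =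
      {s | Minimal (fun t ↦ ∏ i ∈ t, X i ∈ I) s} := by
  ext s
  exact mem_edges_clutterOf.trans
    (minimal_iff_forall_le_imp_eq (P := fun t ↦ ∏ i ∈ t, X i ∈ I)).symm

lemma mem_dependentSets_clutterOf {I : Ideal (MvPoly K (Fin n))} {s : Finset (Fin n)} :
    s ∈ (clutterOf K I).dependentSets ↔ ∏ i ∈ s, X i ∈ I := by
  rw [Clutter.dependentSets, coe_edges_clutterOf,
    mem_upperClosure_setOf_minimal_iff (isUpperSet_setOf_prod_X_mem I)]

lemma idealDual_eq_sqfreeSpan_iff {I : Ideal (MvPoly K (Fin n))} {S : Set (Finset (Fin n))} :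
    idealDual K I = sqfreeSpan K S ↔ ∀ s, ∏ i ∈ sᶜ, X i ∉ I ↔ s ∈ upperClosure S := by
  have hdual : idealDual K I = sqfreeSpan K (clutterOf K I).dual.edges := rfl
  rw [hdual, sqfreeSpan_eq_sqfreeSpan_iff, SetLike.ext_iff]
  refine forall_congr' fun s ↦ iff_congr ?_ Iff.rfl
  rw [← Clutter.dependentSets, Clutter.mem_dependentSets_dual, mem_dependentSets_clutterOf]

lemma prod_X_mem_colon_edgeIdeal_iff {C : Clutter n} {s T : Finset (Fin n)} :
    ∏ i ∈ s, X i ∈ (C.edgeIdeal K).colon (Ideal.span {(∏ i ∈ T, X i : MvPoly K (Fin n))}) ↔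
      s ∪ T ∈ C.dependentSets :=
  Ideal.mem_colon_span_singleton.trans prod_X_mul_prod_X_mem_sqfreeSpan_iff

lemma prod_X_mem_edgeIdeal_add_iff {C : Clutter n} {s T : Finset (Fin n)} :
    ∏ i ∈ s, X i ∈ C.edgeIdeal K + Ideal.span (X '' T) ↔
      s ∈ C.dependentSets ∨ ¬ Disjoint T s := by
  have hadd : C.edgeIdeal K + Ideal.span (X '' T) =
      sqfreeSpan K ((C.edges : Set (Finset (Fin n))) ∪ singleton '' T) :=
    sqfreeSpan_add_span_X_image _
  rw [hadd, prod_X_mem_sqfreeSpan_iff, upperClosure_union, UpperSet.mem_inf_iff,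
    Clutter.dependentSets]
  simp [Finset.not_disjoint_iff]

theorem idealDual_edgeIdeal_colon (C : Clutter n) (T : Finset (Fin n)) :
    idealDual K ((C.edgeIdeal K).colon (Ideal.span {(∏ i ∈ T, X i : MvPoly K (Fin n))})) =
      (C.dual.del T).edgeIdeal K := by
  refine idealDual_eq_sqfreeSpan_iff.2 fun s ↦ ?_
  rw [prod_X_mem_colon_edgeIdeal_iff, ← Clutter.dependentSets, Clutter.mem_dependentSets_del,
    Clutter.mem_dependentSets_dual, compl_sdiff, himp_eq, Finset.sup_eq_union, Finset.union_comm]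

theorem idealDual_coverIdeal_colon (C : Clutter n) (T : Finset (Fin n)) :
    idealDual K ((C.coverIdeal K).colon (Ideal.span {(∏ i ∈ T, X i : MvPoly K (Fin n))})) =
      (C.del T).edgeIdeal K := by
  refine idealDual_eq_sqfreeSpan_iff.2 fun s ↦ ?_
  rw [Clutter.coverIdeal, prod_X_mem_colon_edgeIdeal_iff, ← Clutter.dependentSets,
    Clutter.mem_dependentSets_del, Clutter.mem_dependentSets_dual, not_not, Finset.compl_union,
    compl_compl, Finset.sdiff_eq_inter_compl]

theorem idealDual_edgeIdeal_add (C : Clutter n) (T : Finset (Fin n)) :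
    idealDual K (C.edgeIdeal K + Ideal.span (X '' T)) =
      Ideal.span {∏ i ∈ T, X i} * (C.del T).coverIdeal K := by
  have hdisj : ∀ c ∈ (C.del T).dual.edges, Disjoint T c := fun c hc ↦
    (Clutter.mem_edges_dual.1 hc).disjoint_of_del.symm
  have hcover : (C.del T).coverIdeal K = sqfreeSpan K (C.del T).dual.edges := rfl
  rw [hcover, span_prod_X_mul_sqfreeSpan hdisj, idealDual_eq_sqfreeSpan_iff]
  intro s
  rw [prod_X_mem_edgeIdeal_add_iff, mem_upperClosure_image_union_iff, ← Clutter.dependentSets,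
    Clutter.mem_dependentSets_dual, Clutter.mem_dependentSets_del, not_or, not_not,
    disjoint_compl_right_iff, and_comm]
  refine and_congr_right fun hTs ↦ ?_
  rw [Finset.sdiff_eq_self_of_disjoint (disjoint_compl_right_iff.2 hTs).symm]

end IdealDual

theorem stmt1_general (K : Type) [Field K] (n : ℕ) (C : Clutter n) (T : Finset (Fin n)) :
    idealDual K ((C.coverIdeal K).colon (Ideal.span {(∏ i ∈ T, X i : MvPoly K (Fin n))})) =
      (C.del T).edgeIdeal K ∧
    idealDual K ((C.edgeIdeal K).colon (Ideal.span {(∏ i ∈ T, X i : MvPoly K (Fin n))})) =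
      (C.dual.del T).edgeIdeal K ∧
    idealDual K (C.edgeIdeal K + Ideal.span (X '' T)) =
      Ideal.span {∏ i ∈ T, X i} * (C.del T).coverIdeal K :=
  ⟨idealDual_coverIdeal_colon C T, idealDual_edgeIdeal_colon C T, idealDual_edgeIdeal_add C T⟩

/-- duality formulas for edge ideals of clutters. -/
theorem stmt1 (K : Type) [Field K] (n : ℕ) (C : Clutter n) (T : Finset (Fin n))
    (f : MvPoly K (Fin n)) (hf : f = ∏ i ∈ T, MvPolynomial.X i) :
    (idealDual K ((Clutter.coverIdeal K C).colon (Ideal.span {f})) =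
        Clutter.edgeIdeal K (C.del T)) ∧
    (idealDual K ((Clutter.edgeIdeal K C).colon (Ideal.span {f})) =
        Clutter.edgeIdeal K ((Clutter.dual C).del T)) ∧
    (∀ i : Fin n,
      idealDual K (Clutter.edgeIdeal K C + Ideal.span {(MvPolynomial.X i : MvPoly K (Fin n))}) =
        Ideal.span {(MvPolynomial.X i : MvPoly K (Fin n))} * Clutter.coverIdeal K (C.del {i})) := by
  obtain ⟨hcover, hedge, -⟩ := stmt1_general K n C T
  exact hf ▸ ⟨hcover, hedge, fun i ↦ by simpa using (stmt1_general K n C {i}).2.2⟩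
end
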